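/- The code-generation function on expressions is contained in syntactic correspondence: for every solution Sol, every variant identifier μ (in particular the main-expression variant identifier mainV), and every expression e of the analysed program P, the original expression and its generated version are syntactically corresponding, i.e. ⊢_MAP^{PC,PC⁺} e ∝ viE(Sol, μ, e), where MAP = (methodMap, typeMap) with methodMap = fst ∘ oomn⁻¹ and typeMap = snd ∘ ootype⁻¹, and PC, PC⁺ are the program contexts of P and of the generated program P⁺ = viP(Sol, P). -/

import Mathlib

/-! The translation keeps the shape of an expression, except that `new atomic` becomes a
plain `new`, which `Corr.newAtomic` permits; otherwise it changes names only. Each generated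
type or method name is sent back to the original one by `typeMap` or `methodMap`, so the
`Corr` rule for the head constructor, instantiated at the generated name, relates the
original expression to its translation once the left-inverse law is applied. Structural
induction on the expression, uniform in the state of the `nextvar()` generator, does the
rest. -/

/-- Atomicity values: `atomic` (●ᵃ) and `nonAtomic` (●ⁿ). -/
inductive Atomicity : Type
  | atomic
  | nonAtomic

/-- AtomiS-OOlong expressions, parametric in the types `V` of variables, `T` of types,
`M` of method names and `F` of field names: `null`, variables, (run-time) locations,
field selection `x.f`, field update `x.f = e`, method call `x.m(e)`, let-bindings
`let x : t = e₁ in e₂`, object creation `new C` and `new atomic C`, casts `(t) e`,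
and `finish { async {e₁} async {e₂} }; e₃`. -/
inductive Expr (V T M F : Type) : Type
  | null : Expr V T M F
  | var (x : V) : Expr V T M F
  | loc (l : ℕ) : Expr V T M F
  | select (x : V) (f : F) : Expr V T M F
  | update (x : V) (f : F) (e : Expr V T M F) : Expr V T M F
  | call (x : V) (m : M) (e : Expr V T M F) : Expr V T M F
  | lett (x : V) (t : T) (e₁ e₂ : Expr V T M F) : Expr V T M F
  | new (c : T) : Expr V T M F
  | newAtomic (c : T) : Expr V T M F
  | cast (t : T) (e : Expr V T M F) : Expr V T M F
  | fin (e₁ e₂ e₃ : Expr V T M F) : Expr V T M F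

/-- The syntactic correspondence `⊢_MAP^{PC,PC⁺} e₁ ∝ e₂` between expressions, for
`MAP = (methodMap, typeMap)` (written `mm`, `tm`): two expressions are related when
they have identical shape and every type `t₂` and method name `m₂` occurring in the
right expression appears as `typeMap t₂`, resp. `methodMap m₂`, in the corresponding
position of the left expression; variables, locations, field names and `null` are
related to themselves; all compound expressions are related componentwise.
(An original `new atomic C` corresponds to a generated plain `new` of a type whose
`typeMap`-image is `C`.) -/
inductive Corr {V T M F : Type} (mm : M → M) (tm : T → T) :
    Expr V T M F → Expr V T M F → Prop
  | null : Corr mm tm Expr.null Expr.null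
  | var (x : V) : Corr mm tm (Expr.var x) (Expr.var x)
  | loc (l : ℕ) : Corr mm tm (Expr.loc l) (Expr.loc l)
  | select (x : V) (f : F) : Corr mm tm (Expr.select x f) (Expr.select x f)
  | update {e₁ e₂ : Expr V T M F} (x : V) (f : F) :
      Corr mm tm e₁ e₂ → Corr mm tm (Expr.update x f e₁) (Expr.update x f e₂)
  | call {e₁ e₂ : Expr V T M F} (x : V) (m : M) :
      Corr mm tm e₁ e₂ → Corr mm tm (Expr.call x (mm m) e₁) (Expr.call x m e₂)
  | lett {a₁ a₂ b₁ b₂ : Expr V T M F} (x : V) (t : T) :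
      Corr mm tm a₁ a₂ → Corr mm tm b₁ b₂ →
      Corr mm tm (Expr.lett x (tm t) a₁ b₁) (Expr.lett x t a₂ b₂)
  | new (c : T) : Corr mm tm (Expr.new (tm c)) (Expr.new c)
  | newAtomic (c : T) : Corr mm tm (Expr.newAtomic (tm c)) (Expr.new c)
  | cast {e₁ e₂ : Expr V T M F} (t : T) :
      Corr mm tm e₁ e₂ → Corr mm tm (Expr.cast (tm t) e₁) (Expr.cast t e₂)
  | fin {a₁ a₂ b₁ b₂ c₁ c₂ : Expr V T M F} :
      Corr mm tm a₁ a₂ → Corr mm tm b₁ b₂ → Corr mm tm c₁ c₂ →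
      Corr mm tm (Expr.fin a₁ b₁ c₁) (Expr.fin a₂ b₂ c₂)

/-- The code-generation function on expressions, `viE(Sol, μ, e)`, defined by structural
recursion. `sol : ℕ → Atomicity` is the solution's assignment to the `n`-th atomicity
variable produced by the deterministic generator `nextvar()` (qualified with the current
variant identifier `μ`), and `letA : V → Atomicity` is the solution's assignment to the
atomicity variable `natvar x` of each let-bound variable `x` (qualified with `μ`).
A counter threads the `nextvar()` generator through the recursion: a let-binding's
declared type `t` becomes `ootype (letA x) t`; a method call `x.m(e)` becomes
`x.oomn(m, ν₁, ν₂)(viE e)` where `ν₁`, `ν₂` are the solved argument and return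
atomicities; `new C` becomes `new ootype(ν, C)`; `new atomic C` becomes
`new ootype(●ᵃ, C)`; a cast `(t) e` becomes `(ootype(ν, t)) viE e`; all other
expression forms are translated componentwise. -/
def viE {V T M F : Type} (ootype : Atomicity → T → T)
    (oomn : M → Atomicity → Atomicity → M)
    (sol : ℕ → Atomicity) (letA : V → Atomicity) :
    ℕ → Expr V T M F → Expr V T M F × ℕ
  | n, Expr.null => (Expr.null, n)
  | n, Expr.var x => (Expr.var x, n)
  | n, Expr.loc l => (Expr.loc l, n)
  | n, Expr.select x f => (Expr.select x f, n)
  | n, Expr.update x f e =>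
      let r := viE ootype oomn sol letA n e
      (Expr.update x f r.1, r.2)
  | n, Expr.call x m e =>
      let r := viE ootype oomn sol letA (n + 2) e
      (Expr.call x (oomn m (sol n) (sol (n + 1))) r.1, r.2)
  | n, Expr.lett x t e₁ e₂ =>
      let r₁ := viE ootype oomn sol letA n e₁
      let r₂ := viE ootype oomn sol letA r₁.2 e₂
      (Expr.lett x (ootype (letA x) t) r₁.1 r₂.1, r₂.2)
  | n, Expr.new c => (Expr.new (ootype (sol n) c), n + 1)
  | n, Expr.newAtomic c => (Expr.new (ootype Atomicity.atomic c), n)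
  | n, Expr.cast t e =>
      let r := viE ootype oomn sol letA (n + 1) e
      (Expr.cast (ootype (sol n) t) r.1, r.2)
  | n, Expr.fin e₁ e₂ e₃ =>
      let r₁ := viE ootype oomn sol letA n e₁
      let r₂ := viE ootype oomn sol letA r₁.2 e₂
      let r₃ := viE ootype oomn sol letA r₂.2 e₃
      (Expr.fin r₁.1 r₂.1 r₃.1, r₃.2)

/-- **The code-generation function on expressions is contained in syntactic
correspondence.** For every solution `Sol` — represented, at each variant identifier
`μ`, by its assignments `sol μ` to the generated atomicity variables and `letA μ` to
the atomicity variables of let-bound variables — every variant identifier `μ` (in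
particular the main-expression variant identifier `mainV`), and every expression `e`
of the analysed program `P` (at any state `n` of the `nextvar()` generator), the
original expression and its generated version are syntactically corresponding:
`⊢_MAP^{PC,PC⁺} e ∝ viE(Sol, μ, e)`, where `MAP = (methodMap, typeMap)` with
`methodMap = fst ∘ oomn⁻¹` and `typeMap = snd ∘ ootype⁻¹`, i.e. `methodMap` and
`typeMap` are the (two-sided-on-generated-names) inverses of the injective fresh-name
generators `oomn` and `ootype`, recovering the original method name and base type. -/
theorem viE_contained_in_corr {V T M F VariantId : Type}
    (ootype : Atomicity → T → T) (oomn : M → Atomicity → Atomicity → M)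
    (typeMap : T → T) (methodMap : M → M)
    (htypeMap : ∀ (ν : Atomicity) (t : T), typeMap (ootype ν t) = t)
    (hmethodMap : ∀ (m : M) (ν₁ ν₂ : Atomicity), methodMap (oomn m ν₁ ν₂) = m)
    (sol : VariantId → ℕ → Atomicity) (letA : VariantId → V → Atomicity)
    (μ : VariantId) (n : ℕ) (e : Expr V T M F) :
    Corr methodMap typeMap e (viE ootype oomn (sol μ) (letA μ) n e).1 := by
  -- A subexpression is translated from a generator state that depends on what precedes it,
  -- so the induction hypotheses must hold at every counter value.
  induction e generalizing n with
  | null => exact .null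
  | var x => exact .var x
  | loc l => exact .loc l
  | select x f => exact .select x f
  | update x f e ih => exact .update x f (ih n)
  | call x m e ih =>
    have h := Corr.call (mm := methodMap) x (oomn m (sol μ n) (sol μ (n + 1))) (ih (n + 2))
    rwa [hmethodMap] at h
  | lett x t e₁ e₂ ih₁ ih₂ =>
    have h := Corr.lett (tm := typeMap) x (ootype (letA μ x) t) (ih₁ n)
      (ih₂ (viE ootype oomn (sol μ) (letA μ) n e₁).2)
    rwa [htypeMap] at h
  | new c =>
    have h := Corr.new (V := V) (F := F) (mm := methodMap) (tm := typeMap) (ootype (sol μ n) c)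
    rwa [htypeMap] at h
  | newAtomic c =>
    have h := Corr.newAtomic (V := V) (F := F) (mm := methodMap) (tm := typeMap)
      (ootype Atomicity.atomic c)
    rwa [htypeMap] at h
  | cast t e ih =>
    have h := Corr.cast (tm := typeMap) (ootype (sol μ n) t) (ih (n + 1))
    rwa [htypeMap] at h
  | fin e₁ e₂ e₃ ih₁ ih₂ ih₃ => exact .fin (ih₁ n) (ih₂ _) (ih₃ _)
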